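/- arXiv:0910.5699 — 9 statements merged into one kernel-verified Lean document; each statement's English description precedes it below -/
import Mathlib

section
/- Let A be a commutative ring and let F : ModuleCat A ≌ ModuleCat A be an equivalence of categories whose underlying functor is additive and A-linear. Then there is a natural isomorphism between the functor F and the functor M ↦ M ⊗[A] F(A) (i.e. F.functor is isomorphic to tensorRight applied to the image under F of the monoidal unit A). -/
open CategoryTheory MonoidalCategory

universe u

/-- `Hom(F A, N) ≃ Hom(A, G N) ≃ G N`, linearly, for an `A`-linear equivalence `F` with inverse
`G`. -/
noncomputable def homUnitEquiv {A : Type u} [CommRing A]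
    (F : ModuleCat.{u} A ≌ ModuleCat.{u} A)
    [F.functor.Additive] [F.functor.Linear A] (N : ModuleCat.{u} A) :
    (F.functor.obj (𝟙_ (ModuleCat.{u} A)) ⟶ N) ≃ₗ[A] F.inverse.obj N :=
  let e : (F.functor.obj (𝟙_ (ModuleCat.{u} A)) ⟶ N) ≃ₗ[A]
      (𝟙_ (ModuleCat.{u} A) ⟶ F.inverse.obj N) :=
    { F.toAdjunction.homEquiv (𝟙_ (ModuleCat.{u} A)) N with
      map_add' := fun f g => by
        simp [Adjunction.homEquiv_unit, Functor.map_add]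
      map_smul' := fun r f => by
        simp [Adjunction.homEquiv_unit, Functor.map_smul] }
  e.trans ((ModuleCat.homLinearEquiv (S := A)).trans
    (LinearMap.ringLmapEquivSelf A A (F.inverse.obj N)))

/-- The inverse of `F` is the internal hom functor out of `F A`. -/
noncomputable def ihomIsoInverse {A : Type u} [CommRing A]
    (F : ModuleCat.{u} A ≌ ModuleCat.{u} A)
    [F.functor.Additive] [F.functor.Linear A] :
    ihom (F.functor.obj (𝟙_ (ModuleCat.{u} A))) ≅ F.inverse :=
  NatIso.ofComponents (fun N => (homUnitEquiv F N).toModuleIso) (by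
    intro N P f
    ext g
    exact congrArg
      (fun h : 𝟙_ (ModuleCat.{u} A) ⟶ F.inverse.obj P => h.hom (1 : A))
      (F.toAdjunction.homEquiv_naturality_right
        (show F.functor.obj (𝟙_ (ModuleCat.{u} A)) ⟶ N from g) f))

/-- For a commutative ring `A` and an additive, `A`-linear auto-equivalence `F` of the
category of `A`-modules, `F` is naturally isomorphic to `- ⊗[A] F(A)`. -/
theorem stmt_0 {A : Type u} [CommRing A]
    (F : ModuleCat.{u} A ≌ ModuleCat.{u} A)
    [F.functor.Additive] [F.functor.Linear A] :
    Nonempty (F.functor ≅ tensorRight (F.functor.obj (𝟙_ (ModuleCat.{u} A)))) :=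
  ⟨F.toAdjunction.leftAdjointUniq
      ((ihom.adjunction (F.functor.obj (𝟙_ (ModuleCat.{u} A)))).ofNatIsoRight
        (ihomIsoInverse F)) ≪≫
    BraidedCategory.tensorLeftIsoTensorRight _⟩
end

section
/- Let A be a commutative ring and let F : ModuleCat A ≌ ModuleCat A be an equivalence of categories whose underlying functor is additive and A-linear. Then the A-module F(A) (the image under F of the monoidal unit) is invertible: there exists an A-module N together with an A-linear isomorphism N ⊗[A] F(A) ≅ A. -/
open CategoryTheory MonoidalCategory

universe u

section Helpers

variable {A : Type u} [CommRing A] (F : ModuleCat.{u} A ≌ ModuleCat.{u} A)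
  [F.functor.Additive] [F.functor.Linear A]

/-- The natural linear isomorphism `F M ≃ Hom(F⁻¹ A, M)`. -/
noncomputable def stmtEquiv (M : ModuleCat.{u} A) :
    F.functor.obj M ≃ₗ[A] (F.inverse.obj (ModuleCat.of A A) →ₗ[A] M) :=
  haveI : F.inverse.Additive := F.inverse_additive
  haveI : F.inverse.Linear A := F.inverseLinear A
  { toFun := fun x => ((F.symm.toAdjunction.homEquiv (ModuleCat.of A A) M).symm
      (ModuleCat.ofHom (LinearMap.toSpanSingleton A _ x))).hom
    invFun := fun g =>
      ((F.symm.toAdjunction.homEquiv (ModuleCat.of A A) M) (ModuleCat.ofHom g)).hom (1 : A)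
    map_add' := fun x y => by
      have h : ModuleCat.ofHom (LinearMap.toSpanSingleton A (F.functor.obj M) (x + y)) =
        ModuleCat.ofHom (LinearMap.toSpanSingleton A _ x) +
          ModuleCat.ofHom (LinearMap.toSpanSingleton A _ y) := by
        ext; simp
      rw [h]
      simp [Adjunction.homEquiv_counit, Functor.map_add]
    map_smul' := fun a x => by
      have h : ModuleCat.ofHom (LinearMap.toSpanSingleton A (F.functor.obj M) (a • x)) =
        a • ModuleCat.ofHom (LinearMap.toSpanSingleton A _ x) := by
        ext; simp
      rw [h]
      simp [Adjunction.homEquiv_counit, Functor.map_smul]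
    left_inv := fun x => by
      simp only [ModuleCat.ofHom_hom, Equiv.apply_symm_apply, ModuleCat.hom_ofHom]
      exact LinearMap.toSpanSingleton_apply_one A _ x
    right_inv := fun g => by
      have h : ModuleCat.ofHom (LinearMap.toSpanSingleton A (F.functor.obj M)
          (((F.symm.toAdjunction.homEquiv (ModuleCat.of A A) M) (ModuleCat.ofHom g)).hom
            (1 : A))) =
          (F.symm.toAdjunction.homEquiv (ModuleCat.of A A) M) (ModuleCat.ofHom g) := by
        apply ModuleCat.hom_ext
        apply LinearMap.ext_ring
        exact LinearMap.toSpanSingleton_apply_one A _ _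
      simp only
      rw [h, Equiv.symm_apply_apply]
      rfl }

lemma stmtEquiv_naturality {M M' : ModuleCat.{u} A} (f : M ⟶ M') (x : F.functor.obj M) :
    stmtEquiv F M' ((F.functor.map f).hom x) = f.hom ∘ₗ stmtEquiv F M x := by
  have h : ModuleCat.ofHom (LinearMap.toSpanSingleton A (F.functor.obj M')
      ((F.functor.map f).hom x)) =
      ModuleCat.ofHom (LinearMap.toSpanSingleton A _ x) ≫ F.functor.map f := by
    ext; simp
  have h2 := F.symm.toAdjunction.homEquiv_naturality_right_symm
    (ModuleCat.ofHom (LinearMap.toSpanSingleton A _ x)) f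
  change ((F.symm.toAdjunction.homEquiv (ModuleCat.of A A) M').symm
      (ModuleCat.ofHom (LinearMap.toSpanSingleton A _ _))).hom = _
  rw [h]
  exact congrArg ModuleCat.Hom.hom h2

/-- The bijection `Hom(A, M) ≃ Hom(F A ⊗ F⁻¹ A, M)`. -/
noncomputable def stmtHomEquiv (M : ModuleCat.{u} A) :
    (ModuleCat.of A A ⟶ M) ≃
      (ModuleCat.of A (TensorProduct A (F.functor.obj (ModuleCat.of A A))
        (F.inverse.obj (ModuleCat.of A A))) ⟶ M) :=
  F.fullyFaithfulFunctor.homEquiv.trans <|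
  ModuleCat.homEquiv.trans <|
  ((stmtEquiv F M).congrRight (M := F.functor.obj (ModuleCat.of A A))).toEquiv.trans <|
  (TensorProduct.lift.equiv (RingHom.id A) (F.functor.obj (ModuleCat.of A A))
    (F.inverse.obj (ModuleCat.of A A)) M).toEquiv.trans
  (ModuleCat.homEquiv (M := ModuleCat.of A (TensorProduct A (F.functor.obj (ModuleCat.of A A))
    (F.inverse.obj (ModuleCat.of A A)))) (N := M)).symm

lemma stmtHomEquiv_naturality {M M' : ModuleCat.{u} A} (g : M ⟶ M') (f : ModuleCat.of A A ⟶ M) :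
    stmtHomEquiv F M' (f ≫ g) = stmtHomEquiv F M f ≫ g := by
  apply ModuleCat.hom_ext
  apply TensorProduct.ext'
  intro x y
  change stmtEquiv F M' ((F.functor.map (f ≫ g)).hom x) y =
    g.hom (stmtEquiv F M ((F.functor.map f).hom x) y)
  rw [F.functor.map_comp]
  exact congrArg (fun k => k y) (stmtEquiv_naturality F g ((F.functor.map f).hom x))

end Helpers

/-- For a commutative ring `A` and an additive, `A`-linear auto-equivalence `F` of the
category of `A`-modules, the module `F(A)` is invertible: there is an `A`-module `N`
with `N ⊗[A] F(A) ≃ₗ[A] A`. -/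
theorem stmt_1 {A : Type u} [CommRing A]
    (F : ModuleCat.{u} A ≌ ModuleCat.{u} A)
    [F.functor.Additive] [F.functor.Linear A] :
    ∃ N : ModuleCat.{u} A,
      Nonempty (TensorProduct A N (F.functor.obj (𝟙_ (ModuleCat.{u} A))) ≃ₗ[A] A) := by
  refine ⟨F.inverse.obj (ModuleCat.of A A), ⟨?_⟩⟩
  have i : ModuleCat.of A (TensorProduct A (F.functor.obj (ModuleCat.of A A))
        (F.inverse.obj (ModuleCat.of A A))) ≅ ModuleCat.of A A :=
    Coyoneda.ext _ _ (fun {M} f => (stmtHomEquiv F M).symm f) (fun {M} f => stmtHomEquiv F M f)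
      (fun f => by simp) (fun f => by simp)
      (fun f g => stmtHomEquiv_naturality F g f)
  exact (TensorProduct.comm A _ _).trans i.toLinearEquiv
end

section
/- Let A be a commutative ring and let F : ModuleCat A ⥤ ModuleCat A be an additive, A-linear functor that preserves all small colimits. Then there is a natural isomorphism between F and the functor M ↦ M ⊗[A] F(A) (i.e. F is isomorphic to tensorRight applied to F of the monoidal unit A). -/
open CategoryTheory MonoidalCategory

universe u

section
open Limits

/-- A natural transformation between functors preserving a colimit which is an isomorphism
on the diagram is an isomorphism on the colimit. -/
lemma isIso_app_of_isColimit_aux {C D J : Type*} [Category* C] [Category* D] [Category* J]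
    {F G : C ⥤ D} (τ : F ⟶ G) {K : J ⥤ C} (c : Cocone K) (hc : IsColimit c)
    [PreservesColimit K F] [PreservesColimit K G] (h : ∀ j, IsIso (τ.app (K.obj j))) :
    IsIso (τ.app c.pt) := by
  let hF := isColimitOfPreserves F hc
  let hG := isColimitOfPreserves G hc
  let e : K ⋙ F ≅ K ⋙ G :=
    NatIso.ofComponents (fun j => @asIso _ _ _ _ (τ.app (K.obj j)) (h j)) (by intros; simp)
  have : τ.app c.pt = (IsColimit.coconePointsIsoOfNatIso hF hG e).hom := by
    apply hF.hom_ext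
    intro j
    rw [IsColimit.comp_coconePointsIsoOfNatIso_hom]
    simp [e]
    rfl
  rw [this]
  infer_instance

lemma isIso_of_separator_aux {C D : Type*} [Category.{u} C] [Abelian C] [HasCoproducts.{u} C]
    [Category* D] {F G : C ⥤ D} [PreservesColimitsOfSize.{u, u} F]
    [PreservesColimitsOfSize.{u, u} G]
    (τ : F ⟶ G) (S : C) (hS : IsSeparator S) (h : IsIso (τ.app S)) : IsIso τ := by
  have : PreservesColimitsOfSize.{0, 0} F := preservesColimitsOfSize_shrink.{0, u, 0, u} F
  have : PreservesColimitsOfSize.{0, 0} G := preservesColimitsOfSize_shrink.{0, u, 0, u} G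
  have hcop (X : C) : IsIso (τ.app (∐ fun _ : S ⟶ X => S)) :=
    isIso_app_of_isColimit_aux τ _ (coproductIsCoproduct _) (fun _ => h)
  have hepi := (isSeparator_iff_epi S).1 hS
  rw [NatTrans.isIso_iff_isIso_app]
  intro M
  let p := Sigma.desc (fun f : S ⟶ M => f)
  have : Epi p := hepi M
  let q := Sigma.desc (fun f : S ⟶ kernel p => f)
  have : Epi q := hepi _
  have hc := isCokernelEpiComp (Abelian.epiIsCokernelOfKernel (f := p) _ (kernelIsKernel p)) q rfl
  refine isIso_app_of_isColimit_aux τ _ hc ?_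
  rintro (_ | _)
  · exact hcop _
  · exact hcop _

variable {A : Type u} [CommRing A] (F : ModuleCat.{u} A ⥤ ModuleCat.{u} A)
    [F.Additive] [F.Linear A]

/-- The canonical map `m ⊗ x ↦ F (a ↦ a • m) x`. -/
noncomputable def wattsMap : tensorRight (F.obj (𝟙_ (ModuleCat.{u} A))) ⟶ F where
  app M := ModuleCat.ofHom (TensorProduct.lift (LinearMap.mk₂ A
    (fun (m : M) (x : F.obj (𝟙_ (ModuleCat.{u} A))) =>
      (F.map (ModuleCat.ofHom (LinearMap.toSpanSingleton A M m) : 𝟙_ (ModuleCat.{u} A) ⟶ M)).hom x)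
    (fun m m' x => by
      rw [LinearMap.toSpanSingleton_add, ModuleCat.ofHom_add, F.map_add]; rfl)
    (fun a m x => by
      have e : (ModuleCat.ofHom (LinearMap.toSpanSingleton A M (a • m)) : 𝟙_ (ModuleCat.{u} A) ⟶ M)
          = a • (ModuleCat.ofHom (LinearMap.toSpanSingleton A M m) : 𝟙_ (ModuleCat.{u} A) ⟶ M) := by
        rw [LinearMap.toSpanSingleton_smul]; rfl
      rw [e, F.map_smul]; rfl)
    (fun m x y => by simp)
    (fun a m x => by simp)))
  naturality M N f := by
    apply ModuleCat.hom_ext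
    apply TensorProduct.ext'
    intro m x
    have : (ModuleCat.ofHom (LinearMap.toSpanSingleton A N (f.hom m)) : 𝟙_ (ModuleCat.{u} A) ⟶ N)
      = (ModuleCat.ofHom (LinearMap.toSpanSingleton A M m) : 𝟙_ (ModuleCat.{u} A) ⟶ M) ≫ f := by
      apply ModuleCat.hom_ext
      apply LinearMap.ext_ring
      simp
    change (F.map (ModuleCat.ofHom (LinearMap.toSpanSingleton A N (f.hom m)) :
      𝟙_ (ModuleCat.{u} A) ⟶ N)).hom x = (F.map f).hom ((F.map _).hom x)
    rw [this, F.map_comp]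
    rfl

lemma wattsMap_unit : (wattsMap F).app (𝟙_ _) = (λ_ (F.obj (𝟙_ (ModuleCat.{u} A)))).hom := by
  apply ModuleCat.hom_ext
  apply TensorProduct.ext'
  intro (a : A) x
  have : (ModuleCat.ofHom (LinearMap.toSpanSingleton A A a) :
      𝟙_ (ModuleCat.{u} A) ⟶ 𝟙_ (ModuleCat.{u} A)) = a • 𝟙 _ := by
    apply ModuleCat.hom_ext
    apply LinearMap.ext_ring
    change (1 : A) • a = a • (1 : A)
    simp
  change (F.map (ModuleCat.ofHom (LinearMap.toSpanSingleton A A a) :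
      𝟙_ (ModuleCat.{u} A) ⟶ 𝟙_ (ModuleCat.{u} A))).hom x = a • x
  rw [this, F.map_smul, F.map_id]
  rfl

lemma unit_isSeparator_aux : IsSeparator (𝟙_ (ModuleCat.{u} A)) := by
  intro X Y f g h
  ext x
  have := h _ ((ObjectProperty.singleton_iff _ _).2 rfl) (ModuleCat.ofHom (LinearMap.toSpanSingleton A X x) :
    𝟙_ (ModuleCat.{u} A) ⟶ X)
  have := congrArg (fun k => k.hom (1 : A)) this
  have h1 : f.hom ((1 : A) • x) = g.hom ((1 : A) • x) := this
  rwa [one_smul] at h1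

end

/-- Eilenberg–Watts, affine endofunctor case: an additive, `A`-linear, colimit-preserving
functor `F : ModuleCat A ⥤ ModuleCat A` is naturally isomorphic to `- ⊗[A] F(A)`. -/
theorem stmt_2 {A : Type u} [CommRing A]
    (F : ModuleCat.{u} A ⥤ ModuleCat.{u} A)
    [F.Additive] [F.Linear A] [Limits.PreservesColimits F] :
    Nonempty (F ≅ tensorRight (F.obj (𝟙_ (ModuleCat.{u} A)))) := by
  have : Limits.PreservesColimits (tensorRight (F.obj (𝟙_ (ModuleCat.{u} A)))) :=
    Limits.preservesColimits_of_natIso (BraidedCategory.tensorLeftIsoTensorRight _)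
  have : IsIso (wattsMap F) :=
    isIso_of_separator_aux _ _ unit_isSeparator_aux (by rw [wattsMap_unit]; infer_instance)
  exact ⟨(asIso (wattsMap F)).symm⟩
end

section
/- Let A and B be commutative rings and let F : ModuleCat A ≌ ModuleCat B be an equivalence of categories whose underlying functor is additive. Then there exist a ring isomorphism e : B ≃+* A and an invertible A-module L (that is, an A-module L admitting an A-module N and an A-linear isomorphism N ⊗[A] L ≅ A) such that the underlying functor of F is isomorphic to the composite of the functor M ↦ M ⊗[A] L (tensorRight L on ModuleCat A) followed by restriction of scalars along e : B →+* A. -/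
open CategoryTheory MonoidalCategory
universe u

lemma center_aux {R : Type u} [CommRing R] (α : 𝟭 (ModuleCat.{u} R) ⟶ 𝟭 (ModuleCat.{u} R)) :
    ∃ r : R, ∀ M, α.app M = r • 𝟙 M := by
  refine ⟨(α.app (ModuleCat.of R R)).hom (1 : R), fun M => ?_⟩
  ext m
  have h := α.naturality (ModuleCat.ofHom (LinearMap.toSpanSingleton R M m))
  have h2 := congrArg (fun f => f.hom (1 : R)) h
  simpa using h2

lemma rel_right {A B : Type u} [CommRing A] [CommRing B]
    (F : ModuleCat.{u} A ≌ ModuleCat.{u} B) (b : B) :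
    ∃ a : A, ∀ M, F.functor.map (a • 𝟙 M) = b • 𝟙 (F.functor.obj M) := by
  obtain ⟨a, ha⟩ := center_aux (R := A)
    { app := fun M => F.functor.preimage (b • 𝟙 (F.functor.obj M))
      naturality := fun M N f => F.functor.map_injective (by simp) }
  exact ⟨a, fun M => by rw [← ha M]; simp⟩

lemma rel_left {A B : Type u} [CommRing A] [CommRing B]
    (F : ModuleCat.{u} A ≌ ModuleCat.{u} B) (a : A) :
    ∃ b : B, ∀ M, F.functor.map (a • 𝟙 M) = b • 𝟙 (F.functor.obj M) := by
  obtain ⟨b, hb⟩ := rel_right F.symm a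
  refine ⟨b, fun M => F.inverse.map_injective ?_⟩
  refine Eq.trans ?_ (hb _).symm
  rw [F.inv_fun_map]
  simp

lemma exists_equiv {A B : Type u} [CommRing A] [CommRing B]
    (F : ModuleCat.{u} A ≌ ModuleCat.{u} B) [F.functor.Additive] :
    ∃ e : B ≃+* A, ∀ b M, F.functor.map (e b • 𝟙 M) = b • 𝟙 (F.functor.obj M) := by
  choose e he using rel_right F
  choose e' he' using rel_left F
  have inj : ∀ {R : Type u} [CommRing R] (r s : R),
      r • 𝟙 (ModuleCat.of R R) = s • 𝟙 (ModuleCat.of R R) → r = s := by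
    intro R _ r s h
    simpa using congrArg (fun f => f.hom (1 : R)) h
  have uA : ∀ a a' : A, (∀ M, F.functor.map (a • 𝟙 M) = F.functor.map (a' • 𝟙 M)) → a = a' :=
    fun a a' h => inj _ _ (F.functor.map_injective (h _))
  have uB : ∀ b b' : B, (∀ M, b • 𝟙 (F.functor.obj M) = b' • 𝟙 (F.functor.obj M)) → b = b' := by
    intro b b' h
    have h2 := h (F.inverse.obj (ModuleCat.of B B))
    refine inj _ _ ?_
    rw [← cancel_epi (F.counit.app _)]
    have := congrArg (fun f => f ≫ F.counit.app _) h2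
    simpa using this
  refine ⟨{ toFun := e, invFun := e', left_inv := ?_, right_inv := ?_, map_mul' := ?_, map_add' := ?_ }, he⟩
  · intro b; exact uB _ _ fun M => by rw [← he', he]
  · intro b; exact uA _ _ fun M => by rw [he, he']
  · intro b c
    refine uA _ _ fun M => ?_
    have : (e b * e c) • 𝟙 M = (e c • 𝟙 M) ≫ (e b • 𝟙 M) := by simp [mul_smul]
    rw [he, this, F.functor.map_comp, he, he]; simp [mul_smul]
  · intro b c
    refine uA _ _ fun M => ?_
    rw [he, add_smul, add_smul, F.functor.map_add, he, he]

lemma ew {R : Type u} [CommRing R] (E : ModuleCat.{u} R ≌ ModuleCat.{u} R)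
    [E.functor.Additive] (hE : ∀ (r : R) M, E.functor.map (r • 𝟙 M) = r • 𝟙 _) :
    Nonempty (E.functor ≅ tensorRight (E.functor.obj (ModuleCat.of R R))) := by
  let L := E.functor.obj (ModuleCat.of R R)
  have hsm : ∀ (r : R) {M N : ModuleCat.{u} R} (f : M ⟶ N),
      E.functor.map (r • f) = r • E.functor.map f := by
    intro r M N f
    have : r • f = (r • 𝟙 M) ≫ f := by simp
    rw [this, E.functor.map_comp, hE]; simp
  let φ : ∀ X : ModuleCat.{u} R, E.inverse.obj X ≃ₗ[R] (L ⟶ X) := fun X =>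
    { toFun := fun m => E.functor.map
        (ModuleCat.ofHom (LinearMap.toSpanSingleton R (E.inverse.obj X) m)) ≫ E.counit.app X
      map_add' := fun m n => by
        rw [LinearMap.toSpanSingleton_add, ModuleCat.ofHom_add, E.functor.map_add,
          Preadditive.add_comp]
      map_smul' := fun r m => by
        have : ModuleCat.ofHom (LinearMap.toSpanSingleton R (E.inverse.obj X) (r • m)) =
            r • ModuleCat.ofHom (LinearMap.toSpanSingleton R (E.inverse.obj X) m) := by
          ext; simp
        rw [this, hsm, Linear.smul_comp]; rfl
      invFun := fun g => (E.unit.app (ModuleCat.of R R) ≫ E.inverse.map g).hom (1 : R)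
      left_inv := fun m => by
        have : E.unit.app (ModuleCat.of R R) ≫ E.inverse.map (E.functor.map
            (ModuleCat.ofHom (LinearMap.toSpanSingleton R (E.inverse.obj X) m)) ≫
              E.counit.app X) =
            ModuleCat.ofHom (LinearMap.toSpanSingleton R (E.inverse.obj X) m) := by
          simp
        beta_reduce; rw [this]; simp
      right_inv := fun g => by
        have : ModuleCat.ofHom (LinearMap.toSpanSingleton R (E.inverse.obj X)
            ((E.unit.app (ModuleCat.of R R) ≫ E.inverse.map g).hom (1 : R))) =
            E.unit.app (ModuleCat.of R R) ≫ E.inverse.map g := by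
          ext; simp
        beta_reduce; rw [this]; simp [L] }
  let iso : E.inverse ≅ ihom L := NatIso.ofComponents (fun X => (φ X).toModuleIso) (by
    intro X Y f
    ext m
    change E.functor.map (ModuleCat.ofHom (LinearMap.toSpanSingleton R (E.inverse.obj Y)
      ((E.inverse.map f).hom m))) ≫ E.counit.app Y =
      (E.functor.map (ModuleCat.ofHom (LinearMap.toSpanSingleton R (E.inverse.obj X) m)) ≫
        E.counit.app X) ≫ f
    have : ModuleCat.ofHom (LinearMap.toSpanSingleton R (E.inverse.obj Y)
      ((E.inverse.map f).hom m)) =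
      ModuleCat.ofHom (LinearMap.toSpanSingleton R (E.inverse.obj X) m) ≫ E.inverse.map f := by
      ext; simp
    rw [this]; simp)
  exact ⟨(Adjunction.leftAdjointUniq E.toAdjunction ((ihom.adjunction L).ofNatIsoRight iso.symm))
    ≪≫ BraidedCategory.tensorLeftIsoTensorRight L⟩

theorem stmt_3 {A B : Type u} [CommRing A] [CommRing B]
    (F : ModuleCat.{u} A ≌ ModuleCat.{u} B) [F.functor.Additive] :
    ∃ (e : B ≃+* A) (L : ModuleCat.{u} A),
      (∃ N : ModuleCat.{u} A, Nonempty (TensorProduct A N L ≃ₗ[A] A)) ∧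
      Nonempty (F.functor ≅ tensorRight L ⋙ ModuleCat.restrictScalars e.toRingHom) := by
  obtain ⟨e, he⟩ := exists_equiv F
  let E := F.trans (ModuleCat.restrictScalarsEquivalenceOfRingEquiv e.symm)
  have hadd : E.functor.Additive := ⟨fun {M N f g} => by
    change (ModuleCat.restrictScalars _).map (F.functor.map (f + g)) = _
    rw [F.functor.map_add]; rfl⟩
  obtain ⟨i⟩ := ew E (fun r M => by
    change (ModuleCat.restrictScalars _).map (F.functor.map (r • 𝟙 M)) = _
    obtain ⟨b, rfl⟩ := e.surjective r
    rw [he]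
    ext m
    change b • m = e.symm (e b) • m
    simp)
  have j : F.functor ≅ E.functor ⋙ ModuleCat.restrictScalars e.toRingHom :=
    Functor.isoWhiskerLeft F.functor
      (ModuleCat.restrictScalarsEquivalenceOfRingEquiv e.symm).unitIso
  refine ⟨e, _, ⟨E.inverse.obj (ModuleCat.of A A), ⟨?_⟩⟩, ⟨j ≪≫ Functor.isoWhiskerRight i _⟩⟩
  exact ((i.app _).symm ≪≫ E.counitIso.app _).toLinearEquiv
end

section
/- Let A be a commutative ring, let F : ModuleCat A ≌ ModuleCat A be an equivalence whose underlying functor is additive and A-linear, and let L be an invertible A-module (i.e. there exists an A-module N and an A-linear isomorphism N ⊗[A] L ≅ A). Then there is a natural isomorphism of functors (tensorLeft L) ⋙ F.functor ≅ F.functor ⋙ (tensorLeft L); that is, F(L ⊗[A] M) ≅ L ⊗[A] F(M) naturally in M. -/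
open CategoryTheory MonoidalCategory

universe u

section Helpers

variable {A : Type u} [CommRing A]

/-- The map `m ↦ l ⊗ m`. -/
noncomputable def insL (L M : ModuleCat.{u} A) (l : L) : M ⟶ L ⊗ M :=
  ModuleCat.ofHom (TensorProduct.mk A L M l)

/-- The comparison `L ⊗ F M ⟶ F (L ⊗ M)`. -/
noncomputable def theta (F : ModuleCat.{u} A ⥤ ModuleCat.{u} A) [F.Additive] [F.Linear A]
    (L M : ModuleCat.{u} A) : L ⊗ F.obj M ⟶ F.obj (L ⊗ M) :=
  ModuleCat.ofHom (TensorProduct.lift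
    { toFun := fun l => (F.map (insL L M l)).hom
      map_add' := fun a b => by
        have : insL L M (a + b) = insL L M a + insL L M b := by
          ext x
          exact TensorProduct.add_tmul a b x
        rw [this, F.map_add]; rfl
      map_smul' := fun r a => by
        have : insL L M (r • a) = r • insL L M a := by
          ext x
          exact (TensorProduct.smul_tmul' r a x).symm
        rw [this, F.map_smul]; rfl })

lemma insL_theta (F : ModuleCat.{u} A ⥤ ModuleCat.{u} A) [F.Additive] [F.Linear A]
    (L M : ModuleCat.{u} A) (l : L) :
    insL L (F.obj M) l ≫ theta F L M = F.map (insL L M l) := by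
  ext x
  exact TensorProduct.lift.tmul _ _

lemma insL_ext {L M X : ModuleCat.{u} A} {f g : L ⊗ M ⟶ X}
    (h : ∀ l, insL L M l ≫ f = insL L M l ≫ g) : f = g := by
  apply ModuleCat.hom_ext
  apply TensorProduct.ext'
  intro l m
  exact congrArg (fun k => k.hom m) (h l)

lemma insL_lift {L M X : ModuleCat.{u} A} (q : L →ₗ[A] M →ₗ[A] X) (l : L) :
    insL L M l ≫ (ModuleCat.ofHom (TensorProduct.lift q) : L ⊗ M ⟶ X) = ModuleCat.ofHom (q l) := by
  ext x
  exact TensorProduct.lift.tmul _ _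

lemma insL_whisker (L : ModuleCat.{u} A) {M M' : ModuleCat.{u} A} (f : M ⟶ M') (l : L) :
    insL L M l ≫ (L ◁ f) = f ≫ insL L M' l := by
  ext x
  rfl

lemma theta_isIso (F : ModuleCat.{u} A ⥤ ModuleCat.{u} A) [F.Additive] [F.Linear A]
    [F.IsEquivalence] (L M : ModuleCat.{u} A) : IsIso (theta F L M) := by
  have hepi : Epi (theta F L M) := by
    constructor
    intro Z g h hgh
    let e := F.objObjPreimageIso Z
    rw [← cancel_mono e.inv]
    obtain ⟨g', hg⟩ := F.map_surjective (g ≫ e.inv)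
    obtain ⟨h', hh⟩ := F.map_surjective (h ≫ e.inv)
    rw [← hg, ← hh]
    congr 1
    apply insL_ext
    intro l
    apply F.map_injective
    rw [F.map_comp, F.map_comp, ← insL_theta, hg, hh, Category.assoc, Category.assoc,
      reassoc_of% hgh]
  let e := F.objObjPreimageIso (L ⊗ F.obj M)
  let X := F.objPreimage (L ⊗ F.obj M)
  let p : L → (M ⟶ X) := fun l => F.preimage (insL L (F.obj M) l ≫ e.inv)
  have hp : ∀ l, F.map (p l) = insL L (F.obj M) l ≫ e.inv := fun l => F.map_preimage _
  let g : L ⊗ M ⟶ X := ModuleCat.ofHom (TensorProduct.lift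
    { toFun := fun l => (p l).hom
      map_add' := fun a b => by
        have : p (a + b) = p a + p b := by
          apply F.map_injective
          rw [F.map_add, hp, hp, hp, ← Preadditive.add_comp]
          congr 1
          ext x
          exact TensorProduct.add_tmul a b x
        rw [this]; rfl
      map_smul' := fun r a => by
        have : p (r • a) = r • p a := by
          apply F.map_injective
          rw [F.map_smul, hp, hp, ← Linear.smul_comp]
          congr 1
        rw [this]; rfl })
  have hg : ∀ l, insL L M l ≫ g = p l := by
    intro l
    exact insL_lift _ l
  have hs : theta F L M ≫ (F.map g ≫ e.hom) = 𝟙 _ := by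
    apply insL_ext
    intro l
    rw [← Category.assoc, insL_theta, ← Category.assoc, ← F.map_comp, hg, hp]
    simp
  have : IsSplitMono (theta F L M) := ⟨⟨⟨_, hs⟩⟩⟩
  exact isIso_of_epi_of_isSplitMono _

end Helpers

/-- Tensoring with an invertible `A`-module `L` commutes with any additive, `A`-linear
auto-equivalence `F` of `ModuleCat A`: `F(L ⊗ M) ≅ L ⊗ F(M)` naturally in `M`. -/
theorem stmt_7 {A : Type u} [CommRing A]
    (F : ModuleCat.{u} A ≌ ModuleCat.{u} A)
    [F.functor.Additive] [F.functor.Linear A]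
    (L : ModuleCat.{u} A)
    (hL : ∃ N : ModuleCat.{u} A, Nonempty (TensorProduct A N L ≃ₗ[A] A)) :
    Nonempty (tensorLeft L ⋙ F.functor ≅ F.functor ⋙ tensorLeft L) := by
  have := theta_isIso F.functor L
  refine ⟨(NatIso.ofComponents (F := F.functor ⋙ tensorLeft L) (G := tensorLeft L ⋙ F.functor)
    (fun M => asIso (theta F.functor L M)) ?_).symm⟩
  intro M M' f
  apply insL_ext
  intro l
  change insL L _ l ≫ (L ◁ F.functor.map f) ≫ theta F.functor L M' =
    insL L _ l ≫ theta F.functor L M ≫ F.functor.map (L ◁ f)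
  rw [← Category.assoc, insL_whisker, Category.assoc, insL_theta, ← Category.assoc, insL_theta,
    ← F.functor.map_comp, ← F.functor.map_comp, insL_whisker]
end

section
/- Let i : A' →+* A and j : A'' →+* A be homomorphisms of commutative rings with j surjective, and let T := {(a', a'') ∈ A' × A'' : i a' = j a''} be the fiber product ring, a subring of A' × A'', with projections p : T →+* A' and q : T →+* A''. Let X be an A'-module and Y an A''-module (each viewed as a T-module via p, resp. q), and suppose given an A-linear isomorphism φ : A ⊗[A'] X ≃ A ⊗[A''] Y (base change along i and along j). Let P := {(x, y) ∈ X × Y : φ (1 ⊗ x) = 1 ⊗ y}, a T-submodule of X × Y. Then the A'-linear map A' ⊗[T] P → X determined by a' ⊗ (x, y) ↦ a' • x is bijective. -/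
open TensorProduct

namespace Stmt10

variable (A' A'' A : Type) [CommRing A'] [CommRing A''] [CommRing A]
  [Algebra A' A] [Algebra A'' A]

/-- The fiber product ring `T = {(a', a'') ∈ A' × A'' : i a' = j a''}`, a subring of
`A' × A''`, where `i : A' → A` and `j : A'' → A` are the given ring homomorphisms
(packaged as algebra structures). -/
def T : Subring (A' × A'') :=
  RingHom.eqLocus ((algebraMap A' A).comp (RingHom.fst A' A''))
    ((algebraMap A'' A).comp (RingHom.snd A' A''))

/-- The first projection `p : T →+* A'`. -/
def p : T A' A'' A →+* A' := (RingHom.fst A' A'').comp (T A' A'' A).subtype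

/-- The second projection `q : T →+* A''`. -/
def q : T A' A'' A →+* A'' := (RingHom.snd A' A'').comp (T A' A'' A).subtype

variable (X Y : Type) [AddCommGroup X] [Module A' X] [AddCommGroup Y] [Module A'' Y]

/-- Any `A'`-module is viewed as a `T`-module via `p`. -/
instance (priority := 100) moduleTleft : Module (T A' A'' A) X := Module.compHom X (p A' A'' A)

/-- Any `A''`-module is viewed as a `T`-module via `q`. -/
instance (priority := 100) moduleTright : Module (T A' A'' A) Y := Module.compHom Y (q A' A'' A)

instance : SMulCommClass (T A' A'' A) A' X :=
  ⟨fun t a x => by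
    show p A' A'' A t • (a • x) = a • (p A' A'' A t • x)
    rw [smul_smul, smul_smul, mul_comm]⟩

variable (φ : TensorProduct A' A X ≃ₗ[A] TensorProduct A'' A Y)

/-- The patching module `P = {(x, y) ∈ X × Y : φ (1 ⊗ x) = 1 ⊗ y}`, a `T`-submodule of
`X × Y`; here `φ : A ⊗[A'] X ≃ₗ[A] A ⊗[A''] Y` is a given `A`-linear isomorphism between
the base changes. -/
def patchSub : Submodule (T A' A'' A) (X × Y) where
  carrier := {xy | φ ((1 : A) ⊗ₜ[A'] xy.1) = (1 : A) ⊗ₜ[A''] xy.2}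
  add_mem' := by
    rintro ⟨x₁, y₁⟩ ⟨x₂, y₂⟩ h₁ h₂
    simp only [Set.mem_setOf_eq] at h₁ h₂ ⊢
    simp only [Prod.fst_add, Prod.snd_add, tmul_add, map_add, h₁, h₂]
  zero_mem' := by
    simp only [Set.mem_setOf_eq, Prod.fst_zero, Prod.snd_zero, tmul_zero, map_zero]
  smul_mem' := by
    intro t xy h
    simp only [Set.mem_setOf_eq] at h ⊢
    have h1 : (t • xy).1 = (t : A' × A'').1 • xy.1 := rfl
    have h2 : (t • xy).2 = (t : A' × A'').2 • xy.2 := rfl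
    rw [h1, h2]
    have e1 : (1 : A) ⊗ₜ[A'] ((t : A' × A'').1 • xy.1)
        = (algebraMap A' A (t : A' × A'').1) ⊗ₜ[A'] xy.1 := by
      rw [← smul_tmul, Algebra.smul_def, mul_one]
    have e2 : (1 : A) ⊗ₜ[A''] ((t : A' × A'').2 • xy.2)
        = (algebraMap A'' A (t : A' × A'').2) ⊗ₜ[A''] xy.2 := by
      rw [← smul_tmul, Algebra.smul_def, mul_one]
    have e3 : (algebraMap A' A (t : A' × A'').1) ⊗ₜ[A'] xy.1
        = (algebraMap A' A (t : A' × A'').1) • ((1 : A) ⊗ₜ[A'] xy.1) := by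
      rw [smul_tmul', smul_eq_mul, mul_one]
    have e4 : (algebraMap A'' A (t : A' × A'').2) ⊗ₜ[A''] xy.2
        = (algebraMap A'' A (t : A' × A'').2) • ((1 : A) ⊗ₜ[A''] xy.2) := by
      rw [smul_tmul', smul_eq_mul, mul_one]
    have ht : algebraMap A' A (t : A' × A'').1 = algebraMap A'' A (t : A' × A'').2 := t.2
    rw [e1, e2, e3, e4, map_smul, h, ht]

/-- Projection `P →ₗ[T] X` onto the first coordinate. -/
def proj : patchSub A' A'' A X Y φ →ₗ[T A' A'' A] X :=
  (LinearMap.fst (T A' A'' A) X Y).comp (patchSub A' A'' A X Y φ).subtype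

/-- The `T`-bilinear pairing `A' × P → X`, `(a', (x, y)) ↦ a' • x`. -/
def bil : A' →ₗ[T A' A'' A] (patchSub A' A'' A X Y φ →ₗ[T A' A'' A] X) where
  toFun a := a • proj A' A'' A X Y φ
  map_add' a b := add_smul a b _
  map_smul' t a := by
    ext w
    simp only [LinearMap.smul_apply, RingHom.id_apply]
    show (p A' A'' A t * a) • proj A' A'' A X Y φ w = p A' A'' A t • a • proj A' A'' A X Y φ w
    rw [mul_smul]

/-- The canonical `A'`-linear map `A' ⊗[T] P → X` determined by `a' ⊗ (x, y) ↦ a' • x`. -/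
noncomputable def patchMap :
    (TensorProduct (T A' A'' A) A' (patchSub A' A'' A X Y φ)) →ₗ[A'] X where
  toFun := TensorProduct.lift (bil A' A'' A X Y φ)
  map_add' u v := map_add _ u v
  map_smul' a z := by
    simp only [RingHom.id_apply]
    induction z using TensorProduct.induction_on with
    | zero => simp
    | tmul b w =>
      rw [smul_tmul', lift.tmul, lift.tmul]
      show ((a • b) • proj A' A'' A X Y φ) w = a • ((b • proj A' A'' A X Y φ) w)
      simp only [LinearMap.smul_apply, smul_eq_mul]
      rw [mul_smul]
    | add u v hu hv =>
      rw [smul_add, map_add, map_add, hu, hv, smul_add]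

theorem surj_one_tmul (hj : Function.Surjective (algebraMap A'' A)) (s : TensorProduct A'' A Y) :
    ∃ y : Y, s = (1 : A) ⊗ₜ[A''] y := by
  induction s using TensorProduct.induction_on with
  | zero => exact ⟨0, by simp⟩
  | tmul a y =>
    obtain ⟨b, rfl⟩ := hj a
    exact ⟨b • y, by rw [← smul_tmul, Algebra.smul_def, mul_one]⟩
  | add u v hu hv =>
    obtain ⟨y, rfl⟩ := hu
    obtain ⟨z, rfl⟩ := hv
    exact ⟨y + z, by rw [tmul_add]⟩

theorem ker_one_tmul (hj : Function.Surjective (algebraMap A'' A)) (y : Y)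
    (h : (1 : A) ⊗ₜ[A''] y = 0) : y ∈ RingHom.ker (algebraMap A'' A) • (⊤ : Submodule A'' Y) := by
  have hj' : Function.Surjective (Algebra.ofId A'' A) := hj
  let e := Ideal.quotientKerAlgEquivOfSurjective hj'
  have h2 := congrArg (TensorProduct.congr e.symm.toLinearEquiv (LinearEquiv.refl A'' Y)) h
  rw [TensorProduct.congr_tmul, map_zero] at h2
  have h3 : e.symm.toLinearEquiv 1 = 1 := map_one e.symm
  rw [h3] at h2
  have h4 : y ∈ LinearMap.ker (TensorProduct.mk A'' (A'' ⧸ RingHom.ker (Algebra.ofId A'' A)) Y 1) := h2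
  rw [LinearMap.ker_tensorProductMk] at h4
  exact h4

/-- `y` such that `(0, y)` lies in `P` and dies in the base change. -/
def Dies (y : Y) : Prop :=
  ∃ h : ((0 : X), y) ∈ patchSub A' A'' A X Y φ,
    (1 : A') ⊗ₜ[T A' A'' A] (⟨(0, y), h⟩ : patchSub A' A'' A X Y φ) = 0

theorem Dies.add {y z : Y} (hy : Dies A' A'' A X Y φ y) (hz : Dies A' A'' A X Y φ z) :
    Dies A' A'' A X Y φ (y + z) := by
  obtain ⟨h, e⟩ := hy
  obtain ⟨h', e'⟩ := hz
  have hs : ((0 : X), y + z) = (0, y) + (0, z) := by simp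
  refine ⟨hs ▸ add_mem h h', ?_⟩
  have : (⟨(0, y + z), hs ▸ add_mem h h'⟩ : patchSub A' A'' A X Y φ)
      = ⟨(0, y), h⟩ + ⟨(0, z), h'⟩ := Subtype.ext hs
  rw [this, tmul_add, e, e', add_zero]

theorem dies_smul (c : A'') (hc : algebraMap A'' A c = 0) (x : X) (y : Y)
    (h : (x, y) ∈ patchSub A' A'' A X Y φ) : Dies A' A'' A X Y φ (c • y) := by
  let t : T A' A'' A := ⟨(0, c), by
    show algebraMap A' A 0 = algebraMap A'' A c
    rw [hc, map_zero]⟩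
  have hs : ((0 : X), c • y) = t • (x, y) := by
    refine Prod.ext ?_ rfl
    show (0 : X) = (0 : A') • x
    rw [zero_smul]
  have hm : ((0 : X), c • y) ∈ patchSub A' A'' A X Y φ := hs ▸ Submodule.smul_mem _ t h
  refine ⟨hm, ?_⟩
  have : (⟨(0, c • y), hm⟩ : patchSub A' A'' A X Y φ) = t • ⟨(x, y), h⟩ := Subtype.ext hs
  rw [this, ← smul_tmul]
  have h0 : t • (1 : A') = 0 := by
    show (0 : A') * 1 = 0
    rw [zero_mul]
  rw [h0, zero_tmul]

theorem mem_patchSub (x : X) (y : Y) : (x, y) ∈ patchSub A' A'' A X Y φ ↔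
    φ ((1 : A) ⊗ₜ[A'] x) = (1 : A) ⊗ₜ[A''] y := Iff.rfl

theorem exists_lift (hj : Function.Surjective (algebraMap A'' A)) (s : TensorProduct A' A X) :
    ∃ y : Y, φ s = (1 : A) ⊗ₜ[A''] y ∧
      ∀ c : A'', algebraMap A'' A c = 0 → Dies A' A'' A X Y φ (c • y) := by
  induction s using TensorProduct.induction_on with
  | zero =>
    refine ⟨0, by simp, fun c hc => dies_smul A' A'' A X Y φ c hc 0 0 (zero_mem _)⟩
  | tmul a x =>
    obtain ⟨b, rfl⟩ := hj a
    obtain ⟨y, hy⟩ := surj_one_tmul A'' A Y hj (φ ((1 : A) ⊗ₜ[A'] x))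
    refine ⟨b • y, ?_, fun c hc => ?_⟩
    · have e1 : (algebraMap A'' A b) ⊗ₜ[A'] x
          = (algebraMap A'' A b) • ((1 : A) ⊗ₜ[A'] x) := by
        rw [smul_tmul', smul_eq_mul, mul_one]
      rw [e1, map_smul, hy, ← smul_tmul, Algebra.smul_def, smul_tmul', smul_eq_mul]
    · rw [smul_smul]
      exact dies_smul A' A'' A X Y φ (c * b) (by rw [map_mul, hc, zero_mul]) x y hy
  | add u v hu hv =>
    obtain ⟨y, hy, hy'⟩ := hu
    obtain ⟨z, hz, hz'⟩ := hv
    refine ⟨y + z, by rw [map_add, hy, hz, tmul_add], fun c hc => ?_⟩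
    rw [smul_add]
    exact (hy' c hc).add _ _ _ _ _ _ (hz' c hc)

theorem dies_of_ker (hj : Function.Surjective (algebraMap A'' A)) (c : A'')
    (hc : algebraMap A'' A c = 0) (z : Y) : Dies A' A'' A X Y φ (c • z) := by
  obtain ⟨y, hy, hy'⟩ := exists_lift A' A'' A X Y φ hj (φ.symm ((1 : A) ⊗ₜ[A''] z))
  rw [LinearEquiv.apply_symm_apply] at hy
  have h : ((0 : X), z - y) ∈ patchSub A' A'' A X Y φ := by
    rw [mem_patchSub, tmul_sub, hy, sub_self, tmul_zero, map_zero]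
  have := (hy' c hc).add _ _ _ _ _ _ (dies_smul A' A'' A X Y φ c hc 0 (z - y) h)
  rwa [← smul_add, add_sub_cancel] at this

theorem exists_one_tmul (hj : Function.Surjective (algebraMap A'' A))
    (z : TensorProduct (T A' A'' A) A' (patchSub A' A'' A X Y φ)) :
    ∃ w, z = (1 : A') ⊗ₜ[T A' A'' A] w := by
  induction z using TensorProduct.induction_on with
  | zero => exact ⟨0, by simp⟩
  | tmul a w =>
    obtain ⟨b, hb⟩ := hj (algebraMap A' A a)
    let t : T A' A'' A := ⟨(a, b), hb.symm⟩
    refine ⟨t • w, ?_⟩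
    rw [← smul_tmul]
    have h0 : t • (1 : A') = a := mul_one a
    rw [h0]
  | add u v hu hv =>
    obtain ⟨y, rfl⟩ := hu
    obtain ⟨z, rfl⟩ := hv
    exact ⟨y + z, by rw [tmul_add]⟩

/-- Milnor patching (module case of Lemma (i) in the paper's proof that `GL(C)` satisfies
Condition (E)): if `j : A'' → A` is surjective, then for any `A'`-module `X`, `A''`-module
`Y` and `A`-linear isomorphism `φ : A ⊗[A'] X ≅ A ⊗[A''] Y`, the natural `A'`-linear map
`A' ⊗[T] P → X`, `a' ⊗ (x, y) ↦ a' • x`, from the base change of the patched module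
`P = {(x, y) : φ (1 ⊗ x) = 1 ⊗ y}` along `p : T → A'`, is bijective. -/
theorem stmt_10 (hj : Function.Surjective (algebraMap A'' A)) :
    (∀ (a : A') (w : patchSub A' A'' A X Y φ),
        patchMap A' A'' A X Y φ (a ⊗ₜ[T A' A'' A] w) = a • (w : X × Y).1) ∧
      Function.Bijective (patchMap A' A'' A X Y φ) := by
  have key : ∀ (a : A') (w : patchSub A' A'' A X Y φ),
      patchMap A' A'' A X Y φ (a ⊗ₜ[T A' A'' A] w) = a • (w : X × Y).1 := fun a w => rfl
  refine ⟨key, ?_, ?_⟩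
  · rw [injective_iff_map_eq_zero]
    intro z hz
    obtain ⟨⟨⟨x, y⟩, hw⟩, rfl⟩ := exists_one_tmul A' A'' A X Y φ hj z
    rw [key, one_smul] at hz
    change x = 0 at hz
    subst hz
    have h1 : (1 : A) ⊗ₜ[A''] y = 0 := by
      rw [← (mem_patchSub A' A'' A X Y φ 0 y).1 hw, tmul_zero, map_zero]
    have h2 : Dies A' A'' A X Y φ y := by
      refine Submodule.smul_induction_on (ker_one_tmul A'' A Y hj y h1) ?_ ?_
      · intro c hc z _
        exact dies_of_ker A' A'' A X Y φ hj c hc z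
      · intro u v hu hv
        exact hu.add _ _ _ _ _ _ hv
    exact h2.2
  · intro x
    obtain ⟨y, hy⟩ := surj_one_tmul A'' A Y hj (φ ((1 : A) ⊗ₜ[A'] x))
    exact ⟨(1 : A') ⊗ₜ[T A' A'' A] ⟨(x, y), hy⟩, by rw [key, one_smul]⟩

end Stmt10
end

section
/- Let C be a monoidal category that is a groupoid (every morphism is invertible), and suppose that every object of C has a weak inverse: for every object x there exists an object y together with an isomorphism y ⊗ x ≅ 𝟙_C. Then C is a rigid monoidal category, i.e. every object has both a left dual and a right dual. -/
open CategoryTheory MonoidalCategory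

universe v u

/-- In a bicategory, two-sided weak inverses give the two triangle identities (expanded form). -/
theorem bicat_triangles {B : Type*} [Bicategory B] {a b : B} {f : a ⟶ b} {g : b ⟶ a}
    (η : 𝟙 a ≅ f ≫ g) (ε : g ≫ f ≅ 𝟙 b) :
    ∃ ε' : g ≫ f ⟶ 𝟙 b,
      (Bicategory.whiskerLeft g η.hom ≫ (Bicategory.associator g f g).inv ≫
        Bicategory.whiskerRight ε' g =
        (Bicategory.rightUnitor g).hom ≫ (Bicategory.leftUnitor g).inv) ∧
      (Bicategory.whiskerRight η.hom f ≫ (Bicategory.associator f g f).hom ≫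
        Bicategory.whiskerLeft f ε' =
        (Bicategory.leftUnitor f).hom ≫ (Bicategory.rightUnitor f).inv) := by
  let e := Bicategory.Equivalence.mkOfAdjointifyCounit η ε
  refine ⟨e.counit.hom, ?_, ?_⟩
  · have h := e.right_triangle_hom
    simp [Bicategory.rightZigzag, bicategoricalComp] at h
    exact h
  · have h := e.left_triangle_hom
    simp [Bicategory.leftZigzag, bicategoricalComp] at h
    exact h

theorem exactPairing_of_isos {C : Type u} [Category.{v} C] [MonoidalCategory C] {x y : C}
    (η : 𝟙_ C ≅ x ⊗ y) (ε : y ⊗ x ≅ 𝟙_ C) : Nonempty (ExactPairing x y) := by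
  let s := MonoidalSingleObj.star C
  let f : s ⟶ s := x
  let g : s ⟶ s := y
  let η' : 𝟙 s ≅ f ≫ g := ⟨η.hom, η.inv, η.hom_inv_id, η.inv_hom_id⟩
  let ε' : g ≫ f ≅ 𝟙 s := ⟨ε.hom, ε.inv, ε.hom_inv_id, ε.inv_hom_id⟩
  obtain ⟨e, h1, h2⟩ := bicat_triangles η' ε'
  exact ⟨{ coevaluation' := η.hom
           evaluation' := e
           coevaluation_evaluation' := h1
           evaluation_coevaluation' := h2 }⟩

/-- A monoidal groupoid in which every object has a weak inverse is rigid: every object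
has a left dual and a right dual. -/
theorem stmt_12 {C : Type u} [Groupoid.{v} C] [MonoidalCategory C]
    (h : ∀ x : C, ∃ y : C, Nonempty (y ⊗ x ≅ 𝟙_ C)) :
    Nonempty (RigidCategory C) := by
  choose y hy using h
  have hl : ∀ x, Nonempty (x ⊗ y x ≅ 𝟙_ C) := by
    intro x
    obtain ⟨a⟩ := hy x
    obtain ⟨b⟩ := hy (y x)
    -- `x ≅ y (y x)`
    let c : x ≅ y (y x) := (λ_ x).symm ≪≫ whiskerRightIso b.symm x ≪≫ α_ _ _ _ ≪≫
      whiskerLeftIso _ a ≪≫ ρ_ _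
    exact ⟨whiskerRightIso c (y x) ≪≫ b⟩
  have p1 : ∀ x, Nonempty (ExactPairing x (y x)) := fun x =>
    exactPairing_of_isos (hl x).some.symm (hy x).some
  have p2 : ∀ x, Nonempty (ExactPairing (y x) x) := fun x =>
    exactPairing_of_isos (hy x).some.symm (hl x).some
  exact ⟨{ rightDual := fun x => { rightDual := y x, exact := (p1 x).some }
           leftDual := fun x => { leftDual := y x, exact := (p2 x).some } }⟩
end

section
/- Let C be a right rigid monoidal category whose underlying category is a groupoid (every morphism is invertible). Then every object x of C is isomorphic to its double right dual: x ≅ (xᘁ)ᘁ. -/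
open CategoryTheory MonoidalCategory

universe v u

/-- In a right rigid monoidal groupoid, every object is isomorphic to its double right
dual: `x ≅ (xᘁ)ᘁ`. -/
theorem stmt_13 {C : Type u} [Groupoid.{v} C] [MonoidalCategory C] [RightRigidCategory C]
    (x : C) : Nonempty (x ≅ (xᘁ)ᘁ) := by
  exact ⟨(Groupoid.isoEquivHom _ _).symm
    ((ρ_ x).inv ≫ x ◁ (η_ (xᘁ) ((xᘁ)ᘁ)) ≫ (α_ _ _ _).inv ≫
      (Groupoid.inv (η_ x (xᘁ))) ▷ ((xᘁ)ᘁ) ≫ (λ_ _).hom)⟩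
end

section
/- Let C be a symmetric monoidal category, let x, y be objects of C such that the braiding satisfies (β_{x,x}).hom = 𝟙_{x ⊗ x}, and let i : x ⊗ y ≅ 𝟙_C and j : y ⊗ x ≅ 𝟙_C be isomorphisms. Consider the canonical automorphism κ of x defined as the composite x ≅ 𝟙_C ⊗ x (inverse left unitor) ≅ (x ⊗ y) ⊗ x (via i.inv ▷ x) ≅ x ⊗ (y ⊗ x) (associator) ≅ x ⊗ 𝟙_C (via x ◁ j.hom) ≅ x (right unitor). Then κ = 𝟙_x if and only if i.hom = (β_{x,y}).hom ≫ j.hom, i.e. if and only if the triangle formed by the braiding x ⊗ y → y ⊗ x and the two maps i, j to the unit commutes. -/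
open CategoryTheory MonoidalCategory

universe v u

/-- In a symmetric monoidal category, for objects `x, y` with `β_{x,x} = 𝟙` and
isomorphisms `i : x ⊗ y ≅ 𝟙_ C`, `j : y ⊗ x ≅ 𝟙_ C`, the canonical automorphism
`x ≅ 𝟙 ⊗ x ≅ (x ⊗ y) ⊗ x ≅ x ⊗ (y ⊗ x) ≅ x ⊗ 𝟙 ≅ x` is the identity iff
`i.hom = (β_ x y).hom ≫ j.hom`. -/
theorem stmt_14 {C : Type u} [Category.{v} C] [MonoidalCategory C] [SymmetricCategory C]
    (x y : C) (hx : (β_ x x).hom = 𝟙 (x ⊗ x))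
    (i : x ⊗ y ≅ 𝟙_ C) (j : y ⊗ x ≅ 𝟙_ C) :
    ((λ_ x).inv ≫ i.inv ▷ x ≫ (α_ x y x).hom ≫ x ◁ j.hom ≫ (ρ_ x).hom = 𝟙 x)
      ↔ i.hom = (β_ x y).hom ≫ j.hom := by
  have hex : (α_ x y x).hom ≫ (β_ x (y ⊗ x)).hom = (β_ x y).hom ▷ x := by
    have h := BraidedCategory.hexagon_forward x y x
    rw [hx, whiskerLeft_id, Category.comp_id, ← Category.assoc] at h
    exact (cancel_mono _).1 h
  have nat : x ◁ j.hom ≫ (ρ_ x).hom = (β_ x (y ⊗ x)).hom ≫ j.hom ▷ x ≫ (λ_ x).hom := by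
    rw [← braiding_leftUnitor, ← Category.assoc, ← Category.assoc,
      BraidedCategory.braiding_naturality_right]
  have key : (λ_ x).inv ≫ i.inv ▷ x ≫ (α_ x y x).hom ≫ x ◁ j.hom ≫ (ρ_ x).hom
      = (λ_ x).inv ≫ (i.inv ≫ (β_ x y).hom ≫ j.hom) ▷ x ≫ (λ_ x).hom := by
    rw [nat, reassoc_of% hex]
    simp only [comp_whiskerRight, Category.assoc]
  have faithful : ∀ f : 𝟙_ C ⟶ 𝟙_ C, f ▷ x = 𝟙 _ → f = 𝟙 _ := by
    intro f hf
    have h1 : f ▷ (x ⊗ y) = 𝟙 _ := by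
      rw [whiskerRight_tensor, hf]
      simp
    have h2 : f ▷ (𝟙_ C) = 𝟙 _ := by
      have h := whisker_exchange f i.hom
      rw [h1, Category.id_comp] at h
      rw [← cancel_epi ((𝟙_ C) ◁ i.hom), h, Category.comp_id]
    have h3 := whiskerRight_id f
    rw [h2] at h3
    rw [← cancel_epi (ρ_ (𝟙_ C)).hom, ← cancel_mono (ρ_ (𝟙_ C)).inv, Category.assoc, ← h3]
    simp
  rw [key]
  constructor
  · intro h
    have h4 : (i.inv ≫ (β_ x y).hom ≫ j.hom) ▷ x = 𝟙 _ := by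
      rw [← cancel_epi (λ_ x).inv, ← cancel_mono (λ_ x).hom, Category.assoc, h]
      simp
    have h5 := faithful _ h4
    rw [Iso.inv_comp_eq, Category.comp_id] at h5
    exact h5.symm
  · intro h
    rw [← h]
    simp
end
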